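/- The elements Q^{(n)} ∈ TL^B_n defined recursively by Q^{(0)} = 1 and Q^{(n+1)} = Q^{(n)} + ([n]_s/[n+1]_s)·Q^{(n)} e_n Q^{(n)} satisfy, for every n ≥ 0: Q^{(n)} ≠ 0, Q^{(n)}·Q^{(n)} = Q^{(n)}, and e_i·Q^{(n)} = Q^{(n)}·e_i = 0 for all 0 ≤ i ≤ n−1; hence Q^{(n)} is the Jones–Wenzl projection of type B. -/

import Mathlib

noncomputable section
open scoped Classical

/-! ### The field `ℂ(q,s)` and two-variable quantum integers -/

/-- The field `ℂ(q,s)` of rational functions in two variables. -/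
abbrev 𝕃 : Type := FractionRing (MvPolynomial (Fin 2) ℂ)

/-- The variable `q`. -/
def qB : 𝕃 := algebraMap (MvPolynomial (Fin 2) ℂ) 𝕃 (MvPolynomial.X 0)

/-- The variable `s`. -/
def sB : 𝕃 := algebraMap (MvPolynomial (Fin 2) ℂ) 𝕃 (MvPolynomial.X 1)

/-- The two-variable quantum integer `[n]_s`: `[0]_s = 1` and
`[n]_s = q^(n-1) s + q^(-(n-1)) s⁻¹` for `n ≥ 1`. -/
def bqInt (n : ℤ) : 𝕃 := if n = 0 then 1 else qB ^ (n - 1) * sB + qB ^ (1 - n) * sB⁻¹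

/-! ### The Temperley–Lieb algebra of type B and its Jones–Wenzl projections -/

/-- Defining relations of the Temperley–Lieb algebra `TL^B_n` of type B.
The generator indexed by `i : Fin n` represents `e_i` (labels `0, …, n-1`):
the type A relations among `e_1, …, e_{n-1}`, together with `e_0² = -[1]_s e_0`,
`e_1 e_0 e_1 = (q s⁻¹ + q⁻¹ s) e_1`, and `e_0 e_i = e_i e_0` for `i ≥ 2`. -/
inductive TLBrel (n : ℕ) : FreeAlgebra 𝕃 (Fin n) → FreeAlgebra 𝕃 (Fin n) → Prop
  | sqA (i : Fin n) (h : 1 ≤ (i : ℕ)) :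
      TLBrel n (FreeAlgebra.ι 𝕃 i * FreeAlgebra.ι 𝕃 i) ((-(qB + qB⁻¹)) • FreeAlgebra.ι 𝕃 i)
  | sq0 (i : Fin n) (h : (i : ℕ) = 0) :
      TLBrel n (FreeAlgebra.ι 𝕃 i * FreeAlgebra.ι 𝕃 i) ((-(bqInt 1)) • FreeAlgebra.ι 𝕃 i)
  | braidA (i j : Fin n) (hi : 1 ≤ (i : ℕ)) (hj : 1 ≤ (j : ℕ))
      (h : (j : ℕ) = i + 1 ∨ (i : ℕ) = j + 1) :
      TLBrel n (FreeAlgebra.ι 𝕃 i * FreeAlgebra.ι 𝕃 j * FreeAlgebra.ι 𝕃 i) (FreeAlgebra.ι 𝕃 i)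
  | braid0 (i j : Fin n) (hi : (i : ℕ) = 1) (hj : (j : ℕ) = 0) :
      TLBrel n (FreeAlgebra.ι 𝕃 i * FreeAlgebra.ι 𝕃 j * FreeAlgebra.ι 𝕃 i)
        ((qB * sB⁻¹ + qB⁻¹ * sB) • FreeAlgebra.ι 𝕃 i)
  | comm (i j : Fin n) (h : (i : ℕ) + 1 < j ∨ (j : ℕ) + 1 < i) :
      TLBrel n (FreeAlgebra.ι 𝕃 i * FreeAlgebra.ι 𝕃 j) (FreeAlgebra.ι 𝕃 j * FreeAlgebra.ι 𝕃 i)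

/-- The Temperley–Lieb algebra `TL^B_n` of type B, with generators `e_0, …, e_{n-1}`. -/
abbrev TLB (n : ℕ) : Type := RingQuot (TLBrel n)

/-- The generator `e_i` of `TL^B_n` (0-based labels). -/
def EB {n : ℕ} (i : Fin n) : TLB n := RingQuot.mkAlgHom 𝕃 (TLBrel n) (FreeAlgebra.ι 𝕃 i)

set_option synthInstance.maxHeartbeats 1000000 in
/-- The natural inclusion `TL^B_n → TL^B_{n+1}`, sending `e_i` to `e_i`. -/
def TLBincl (n : ℕ) : TLB n →ₐ[𝕃] TLB (n + 1) :=
  RingQuot.liftAlgHom 𝕃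
    ⟨FreeAlgebra.lift 𝕃 (fun i => EB i.castSucc), by
      intro x y h
      induction h with
      | sqA i h =>
          have h2 := RingQuot.mkAlgHom_rel 𝕃 (TLBrel.sqA i.castSucc (by simpa using h))
          simp only [map_mul, map_smul, FreeAlgebra.lift_ι_apply, EB] at h2 ⊢
          exact h2
      | sq0 i h =>
          have h2 := RingQuot.mkAlgHom_rel 𝕃 (TLBrel.sq0 i.castSucc (by simpa using h))
          simp only [map_mul, map_smul, FreeAlgebra.lift_ι_apply, EB] at h2 ⊢
          exact h2
      | braidA i j hi hj h =>
          have h2 := RingQuot.mkAlgHom_rel 𝕃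
            (TLBrel.braidA i.castSucc j.castSucc (by simpa using hi) (by simpa using hj)
              (by simpa using h))
          simp only [map_mul, FreeAlgebra.lift_ι_apply, EB] at h2 ⊢
          exact h2
      | braid0 i j hi hj =>
          have h2 := RingQuot.mkAlgHom_rel 𝕃
            (TLBrel.braid0 i.castSucc j.castSucc (by simpa using hi) (by simpa using hj))
          simp only [map_mul, map_smul, FreeAlgebra.lift_ι_apply, EB] at h2 ⊢
          exact h2
      | comm i j h =>
          have h2 := RingQuot.mkAlgHom_rel 𝕃
            (TLBrel.comm i.castSucc j.castSucc (by simpa using h))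
          simp only [map_mul, FreeAlgebra.lift_ι_apply, EB] at h2 ⊢
          exact h2⟩

/-- The iterated natural inclusion `TL^B_n → TL^B_{n+k}`. -/
def TLBinclIter (n : ℕ) : (k : ℕ) → TLB n →ₐ[𝕃] TLB (n + k)
  | 0 => AlgHom.id 𝕃 (TLB n)
  | k + 1 => (TLBincl (n + k)).comp (TLBinclIter n k)

/-- The type B Jones–Wenzl projection `Q^{(n)} ∈ TL^B_n`, via the recurrence
`Q^{(0)} = 1`, `Q^{(n+1)} = Q^{(n)} + ([n]_s/[n+1]_s) Q^{(n)} e_n Q^{(n)}`. -/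
def JWB : (n : ℕ) → TLB n
  | 0 => 1
  | n + 1 =>
      TLBincl n (JWB n) +
        (bqInt n / bqInt (n + 1)) •
          (TLBincl n (JWB n) * EB (Fin.last n) * TLBincl n (JWB n))

/-- Abstract recursion. -/
def absQ {K A : Type*} [Field K] [Ring A] [Algebra K A] (b : ℕ → K) (e : ℕ → A) : ℕ → A
  | 0 => 1
  | n + 1 => absQ b e n + (b n / b (n + 1)) • (absQ b e n * e n * absQ b e n)

section abs
variable {K A : Type*} [Field K] [Ring A] [Algebra K A] (b : ℕ → K) (e : ℕ → A)

theorem absQ_comm (hc : ∀ i j, i + 1 < j → e i * e j = e j * e i) (n m : ℕ) (h : n < m) :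
    Commute (absQ b e n) (e m) := by
  induction n with
  | zero => exact Commute.one_left _
  | succ n ih =>
    have h1 := ih (by omega)
    have h2 : Commute (e n) (e m) := hc n m h
    exact h1.add_left (((h1.mul_left h2).mul_left h1).smul_left _)

theorem absQ_main (d : K) (κ : ℕ → K) (hb0 : b 0 = 1) (hb : ∀ n, b n ≠ 0)
    (hrec : ∀ n, d * b (n + 1) - κ n * b n = b (n + 2))
    (h0 : e 0 * e 0 = (-(b 1)) • e 0)
    (hs : ∀ n, e (n + 1) * e (n + 1) = (-d) • e (n + 1))
    (hbr : ∀ n, e (n + 1) * e n * e (n + 1) = κ n • e (n + 1))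
    (hc : ∀ i j, i + 1 < j → e i * e j = e j * e i) (n : ℕ) :
    (absQ b e n * absQ b e n = absQ b e n ∧
      ∀ i < n, e i * absQ b e n = 0 ∧ absQ b e n * e i = 0) ∧
    ∀ m, n = m + 1 → absQ b e m * absQ b e m = absQ b e m ∧
      absQ b e m * absQ b e n = absQ b e n ∧ absQ b e n * absQ b e m = absQ b e n := by
  induction n with
  | zero => simp [absQ]
  | succ n ih =>
    obtain ⟨⟨hi, hz⟩, hprev⟩ := ih
    have hk : e n * absQ b e (n + 1) = 0 ∧ absQ b e (n + 1) * e n = 0 := by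
      cases n with
      | zero =>
        have := hb 1
        constructor <;>
        · simp only [absQ, hb0, mul_add, add_mul, one_mul, mul_one, mul_smul_comm, smul_mul_assoc,
            zero_add, h0, smul_smul]
          have : 1 / b 1 * -b 1 = -1 := by field_simp
          rw [this]; simp
      | succ n =>
        have hcm : Commute (absQ b e n) (e (n + 1)) := absQ_comm b e hc n (n + 1) (by omega)
        have hPP : absQ b e n * absQ b e n = absQ b e n ∧
            absQ b e n * absQ b e (n + 1) = absQ b e (n + 1) ∧
            absQ b e (n + 1) * absQ b e n = absQ b e (n + 1) := hprev n rfl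
        obtain ⟨hP, hPQ, hQP⟩ := hPP
        set f := e (n + 1)
        have key : f * absQ b e (n + 1) * f = (-(b (n + 2) / b (n + 1))) • (f * absQ b e n) := by
          have hcm' := hcm.eq
          have h1 : f * absQ b e n * f = (-d) • (f * absQ b e n) := by
            rw [mul_assoc, hcm', ← mul_assoc, hs, smul_mul_assoc]
          have h2 : f * (absQ b e n * e n * absQ b e n) * f = κ n • (f * absQ b e n) := by
            calc _ = (f * absQ b e n) * e n * (absQ b e n * f) := by simp only [mul_assoc]
              _ = (absQ b e n * f) * e n * (f * absQ b e n) := by rw [hcm']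
              _ = absQ b e n * (f * e n * f) * absQ b e n := by simp only [mul_assoc]
              _ = _ := by
                rw [hbr, mul_smul_comm, smul_mul_assoc, hcm', mul_assoc, hP]
          rw [absQ, mul_add, add_mul, h1, mul_smul_comm, smul_mul_assoc, h2, smul_smul, ← add_smul]
          congr 1
          have := hb (n + 1)
          rw [← hrec]
          field_simp
          ring
        have hco : b (n + 1) / b (n + 1 + 1) * -(b (n + 2) / b (n + 1)) = -1 := by
          have := hb (n + 1)
          have := hb (n + 2)
          field_simp
        constructor
        · rw [absQ, mul_add, mul_smul_comm, ← mul_assoc, ← mul_assoc, key, smul_mul_assoc,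
            smul_smul, hco, mul_assoc, hPQ]
          simp
        · rw [absQ, add_mul, smul_mul_assoc, mul_assoc, mul_assoc, ← mul_assoc f, key,
            mul_smul_comm, smul_smul, hco, ← hcm.eq, ← mul_assoc, hQP]
          simp
    have hQP : absQ b e (n + 1) * absQ b e n = absQ b e (n + 1) := by
      rw [absQ, add_mul, smul_mul_assoc, mul_assoc _ (absQ b e n) (absQ b e n), hi]
    have hPQ : absQ b e n * absQ b e (n + 1) = absQ b e (n + 1) := by
      rw [absQ, mul_add, mul_smul_comm, ← mul_assoc, ← mul_assoc, hi]
    refine ⟨⟨?_, ?_⟩, ?_⟩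
    · calc absQ b e (n + 1) * absQ b e (n + 1)
          = absQ b e (n + 1) * (absQ b e n +
              (b n / b (n + 1)) • (absQ b e n * e n * absQ b e n)) := rfl
        _ = absQ b e (n + 1) := by
          rw [mul_add, mul_smul_comm, ← mul_assoc, ← mul_assoc, hQP, hk.2]; simp
    · intro i hin
      rcases Nat.lt_succ_iff_lt_or_eq.mp hin with h | rfl
      · obtain ⟨ha, hb'⟩ := hz i h
        constructor
        · rw [absQ, mul_add, mul_smul_comm, ← mul_assoc, ← mul_assoc, ha]; simp
        · rw [absQ, add_mul, smul_mul_assoc, mul_assoc, hb']; simp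
      · exact hk
    · intro m hm
      obtain rfl : n = m := by omega
      exact ⟨hi, hPQ, hQP⟩
end abs

theorem qB_ne : qB ≠ 0 := by
  unfold qB
  exact (map_ne_zero_iff _ (IsFractionRing.injective (MvPolynomial (Fin 2) ℂ) 𝕃)).mpr
    (MvPolynomial.X_ne_zero 0)

theorem sB_ne : sB ≠ 0 := by
  unfold sB
  exact (map_ne_zero_iff _ (IsFractionRing.injective (MvPolynomial (Fin 2) ℂ) 𝕃)).mpr
    (MvPolynomial.X_ne_zero 1)

theorem bqInt_succ (n : ℕ) : bqInt ((n + 1 : ℕ) : ℤ) = qB ^ n * sB + (qB ^ n)⁻¹ * sB⁻¹ := by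
  have h : ((n + 1 : ℕ) : ℤ) ≠ 0 := by omega
  have h1 : ((n + 1 : ℕ) : ℤ) - 1 = n := by omega
  have h2 : 1 - ((n + 1 : ℕ) : ℤ) = -n := by omega
  rw [bqInt, if_neg h, h1, h2, zpow_neg, zpow_natCast]

theorem bqInt_ne (n : ℕ) : bqInt (n : ℤ) ≠ 0 := by
  cases n with
  | zero => simp [bqInt]
  | succ n =>
    rw [bqInt_succ]
    intro h
    have hq := qB_ne
    have hs := sB_ne
    have h2 : (qB ^ n * sB) ^ 2 + 1 = 0 := by
      field_simp at h
      linear_combination h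
    have h3 : algebraMap (MvPolynomial (Fin 2) ℂ) 𝕃
        ((MvPolynomial.X 0 ^ n * MvPolynomial.X 1) ^ 2 + 1) = 0 := by
      simpa [qB, sB] using h2
    have h4 := (map_eq_zero_iff _ (IsFractionRing.injective (MvPolynomial (Fin 2) ℂ) 𝕃)).mp h3
    have h5 := congrArg (MvPolynomial.eval (fun _ => (0 : ℂ))) h4
    simp at h5

theorem TLBincl_EB (n : ℕ) (i : Fin n) : TLBincl n (EB i) = EB i.castSucc := by
  unfold TLBincl
  rw [EB, RingQuot.liftAlgHom_mkAlgHom_apply, FreeAlgebra.lift_ι_apply]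

theorem JWB_map {A : Type*} [Ring A] [Algebra 𝕃 A] (e : ℕ → A) (n : ℕ) :
    ∀ φ : TLB n →ₐ[𝕃] A, (∀ i : Fin n, φ (EB i) = e i) →
      φ (JWB n) = absQ (fun k : ℕ => bqInt (k : ℤ)) e n := by
  induction n with
  | zero => intro φ _; rw [JWB, map_one, absQ]
  | succ n ih =>
    intro φ hφ
    have h := ih (φ.comp (TLBincl n)) (fun i => by
      rw [AlgHom.comp_apply, TLBincl_EB, hφ]; rfl)
    rw [AlgHom.comp_apply] at h
    rw [JWB, map_add, map_smul, map_mul, map_mul, h, hφ, absQ]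
    simp

/-- The counit. -/
def counitB (n : ℕ) : TLB n →ₐ[𝕃] 𝕃 :=
  RingQuot.liftAlgHom 𝕃
    ⟨FreeAlgebra.lift 𝕃 (fun _ => (0 : 𝕃)), by
      intro x y h
      induction h <;> simp⟩

theorem JWB_ne (n : ℕ) : JWB n ≠ 0 := by
  intro h
  have h1 := JWB_map (fun _ => (0 : 𝕃)) n (counitB n) (fun i => by
    unfold counitB
    rw [EB, RingQuot.liftAlgHom_mkAlgHom_apply, FreeAlgebra.lift_ι_apply])
  have h2 : ∀ m, absQ (fun k : ℕ => bqInt (k : ℤ)) (fun _ => (0 : 𝕃)) m = 1 := by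
    intro m
    induction m with
    | zero => rfl
    | succ m ih => rw [absQ, ih]; simp
  rw [h, map_zero, h2] at h1
  exact zero_ne_one h1

/-- Generators extended by zero. -/
def extE (N : ℕ) (i : ℕ) : TLB N := if h : i < N then EB ⟨i, h⟩ else 0

theorem extE_pos {N i : ℕ} (h : i < N) : extE N i = EB ⟨i, h⟩ := dif_pos h
theorem extE_neg {N i : ℕ} (h : ¬ i < N) : extE N i = 0 := dif_neg h

theorem ext_main (N : ℕ) : absQ (fun k : ℕ => bqInt (k : ℤ)) (extE N) N *
      absQ (fun k : ℕ => bqInt (k : ℤ)) (extE N) N = absQ (fun k : ℕ => bqInt (k : ℤ)) (extE N) N ∧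
    ∀ i < N, extE N i * absQ (fun k : ℕ => bqInt (k : ℤ)) (extE N) N = 0 ∧
      absQ (fun k : ℕ => bqInt (k : ℤ)) (extE N) N * extE N i = 0 := by
  refine (absQ_main (fun k : ℕ => bqInt (k : ℤ)) (extE N) (qB + qB⁻¹)
    (fun n => if n = 0 then qB * sB⁻¹ + qB⁻¹ * sB else 1) ?_ bqInt_ne ?_ ?_ ?_ ?_ ?_ N).1
  · simp [bqInt]
  · intro n
    have hq := qB_ne
    have hs := sB_ne
    cases n with
    | zero =>
      simp only [bqInt_succ]
      simp [bqInt]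
      field_simp
      ring
    | succ n =>
      simp only [bqInt_succ]
      simp
      field_simp
      ring
  · by_cases h : 0 < N
    · rw [extE_pos h]
      have h2 := RingQuot.mkAlgHom_rel 𝕃 (TLBrel.sq0 (⟨0, h⟩ : Fin N) rfl)
      rw [map_mul, map_smul] at h2
      exact h2
    · rw [extE_neg h, mul_zero, smul_zero]
  · intro n
    by_cases h : n + 1 < N
    · rw [extE_pos h]
      have h2 := RingQuot.mkAlgHom_rel 𝕃 (TLBrel.sqA (⟨n + 1, h⟩ : Fin N) (by simp))
      rw [map_mul, map_smul] at h2
      exact h2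
    · rw [extE_neg h, mul_zero, smul_zero]
  · intro n
    by_cases h : n + 1 < N
    · have h' : n < N := by omega
      rw [extE_pos h, extE_pos h']
      cases n with
      | zero =>
        have h2 := RingQuot.mkAlgHom_rel 𝕃
          (TLBrel.braid0 (⟨0 + 1, h⟩ : Fin N) ⟨0, h'⟩ rfl rfl)
        rw [map_mul, map_mul, map_smul] at h2
        rw [if_pos rfl]
        exact h2
      | succ n =>
        have h2 := RingQuot.mkAlgHom_rel 𝕃
          (TLBrel.braidA (⟨n + 1 + 1, h⟩ : Fin N) ⟨n + 1, h'⟩ (by simp) (by simp) (by simp))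
        rw [map_mul, map_mul] at h2
        rw [if_neg (by omega), one_smul]
        exact h2
    · rw [extE_neg h, mul_zero, smul_zero]
  · intro i j hij
    by_cases h : j < N
    · have h' : i < N := by omega
      rw [extE_pos h, extE_pos h']
      have h2 := RingQuot.mkAlgHom_rel 𝕃
          (TLBrel.comm (⟨i, h'⟩ : Fin N) ⟨j, h⟩ (Or.inl hij))
      rw [map_mul, map_mul] at h2
      exact h2
    · rw [extE_neg h, mul_zero, zero_mul]

/-- For every `n ≥ 0` the element `Q^{(n)}` satisfies `Q^{(n)} ≠ 0`,
`Q^{(n)}·Q^{(n)} = Q^{(n)}` and `e_i·Q^{(n)} = Q^{(n)}·e_i = 0` for all `0 ≤ i ≤ n-1`;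
hence `Q^{(n)}` is the Jones–Wenzl projection of type B. -/
theorem JWB_is_jones_wenzl (n : ℕ) :
    JWB n ≠ 0 ∧ JWB n * JWB n = JWB n ∧
      ∀ i : Fin n, EB i * JWB n = 0 ∧ JWB n * EB i = 0 := by
  have h := JWB_map (extE n) n (AlgHom.id 𝕃 (TLB n)) (fun i => (extE_pos i.2).symm)
  have h' : JWB n = absQ (fun k : ℕ => bqInt (k : ℤ)) (extE n) n := h
  obtain ⟨h1, h2⟩ := ext_main n
  rw [← h'] at h1 h2
  refine ⟨JWB_ne n, h1, fun i => ?_⟩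
  have h3 := h2 i i.2
  rw [extE_pos i.2] at h3
  exact h3
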